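/- Let β=(1,2) and γ∈{γ_adj,γ_opp}. (a) There exist constants 0<c<C and A*≥1 such that for all A_1≥A* (and A_2=10A_1), every (1,2)-cube Q=I×J and every x∈Q: c·ℓ(I) ≤ m(I(x,+,W_1)) ≤ C·ℓ(I), where m is one-dimensional Lebesgue measure. (b) For every ε>0 there exists A**≥1 such that for all A_1≥A**, every (1,2)-cube Q and all x,x'∈Q: m(I(x,+,W_1)) ≤ (1+ε)·m(I(x',+,W_1)). -/

import Mathlib

/-!
Write `c₁ = L(A₁ + 3/2)`, `c₂ = L(10A₁ + 3/2)` for the midpoints of the two parameter intervals and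
`t = c₁ + v` for a point of the fibre over `x = (x₀ + a, y₀ + b)`. Only positive parameters matter,
so both curves may be replaced by `t ↦ (t, t²)`. Membership of `x + γ(t)` in `P̃` means that some
`s = c₂ + u` with `|u| ≤ 3L/2` satisfies

* `a + v + u ∈ [0, L]`, and
* `b + 2c₁v + v² + 2c₂u + u² ∈ [0, L²]`.

Since `c₁, c₂` are about `LA₁` and `10LA₁`, the second condition forces `v + 10u = O(L/A₁)`
(`abs_v_add_ten_u_le`), so the first one says `a + (9/10)v ∈ [0, L]` up to an error `O(L/A₁)`.
Conversely, for such `v` some `u` makes `2c₁v + v² + 2c₂u + u²` vanish, and `x + γ(t) ∈ Q̃` holds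
trivially because `t` itself lies in `I_{A₁}`. Hence the fibre is squeezed between two intervals of
lengths `(10/9)(1 ∓ 2.2/A₁)L` (`fibre_subset`, `subset_fibre`), uniformly in `x`, which gives both
claims.
-/

open MeasureTheory Set

noncomputable section

/-- The parabola `γ_adj(t) = (t, t²)` (parts in adjacent quadrants). -/
def gAdj (t : ℝ) : ℝ × ℝ := (t, t ^ 2)

/-- The parabola `γ_opp(t) = (t, sign(t)·t²)` (parts in opposite quadrants). -/
def gOpp (t : ℝ) : ℝ × ℝ := (t, Real.sign t * t ^ 2)

/-- The `(1,2)`-cube `Q = I × J` with `I = [x₀, x₀+L]`, `J = [y₀, y₀+L²]`,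
so that `ℓ(J) = ℓ(I)²`. -/
def cubeQ (x0 y0 L : ℝ) : Set (ℝ × ℝ) :=
  Icc x0 (x0 + L) ×ˢ Icc y0 (y0 + L ^ 2)

/-- The auxiliary interval `I_A = ℓ(I)·[A, A+3]`. -/
def intA (L A : ℝ) : Set ℝ := Icc (L * A) (L * (A + 3))

/-- `Q̃ = {x + γ(t) : x ∈ Q, t ∈ I_{A₁}}`. -/
def tilQ (γ : ℝ → ℝ × ℝ) (x0 y0 L A1 : ℝ) : Set (ℝ × ℝ) :=
  {w | ∃ x ∈ cubeQ x0 y0 L, ∃ t ∈ intA L A1, w = x + γ t}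

/-- `P = V₁ + γ(c_{I_{A₂}})` with `V₁ = Q + γ(c_{I_{A₁}})` and `A₂ = 10·A₁`. -/
def setP (γ : ℝ → ℝ × ℝ) (x0 y0 L A1 : ℝ) : Set (ℝ × ℝ) :=
  (fun x => x + γ (L * (A1 + 3/2)) + γ (L * (10 * A1 + 3/2))) '' cubeQ x0 y0 L

/-- `P̃ = {z - γ(t) : z ∈ P, t ∈ I_{A₂}}` with `A₂ = 10·A₁`. -/
def tilP (γ : ℝ → ℝ × ℝ) (x0 y0 L A1 : ℝ) : Set (ℝ × ℝ) :=
  {w | ∃ z ∈ setP γ x0 y0 L A1, ∃ t ∈ intA L (10 * A1), w = z - γ t}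

/-- `W₁ = Q̃ ∩ P̃`. -/
def setW1 (γ : ℝ → ℝ × ℝ) (x0 y0 L A1 : ℝ) : Set (ℝ × ℝ) :=
  tilQ γ x0 y0 L A1 ∩ tilP γ x0 y0 L A1

/-- `φ(a, −, B) = {a − γ(t) : t ∈ ℝ} ∩ B`. -/
def phiM (γ : ℝ → ℝ × ℝ) (a : ℝ × ℝ) (B : Set (ℝ × ℝ)) : Set (ℝ × ℝ) :=
  {w ∈ B | ∃ t : ℝ, w = a - γ t}

/-- `I(a, +, B) = {t ∈ ℝ : a + γ(t) ∈ B}`. -/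
def IsetP (γ : ℝ → ℝ × ℝ) (a : ℝ × ℝ) (B : Set (ℝ × ℝ)) : Set ℝ :=
  {t : ℝ | a + γ t ∈ B}


/-- The second-coordinate condition of `P̃`, linearised at the midpoints of the parameter
intervals: `v` and `-10u` agree up to `11L/A`. -/
lemma abs_v_add_ten_u_le {L A u v : ℝ} (hL : 0 < L) (hA : 2 ≤ A)
    (hu : |u| ≤ 3 / 2 * L) (hv : |v| ≤ 5 / 2 * L)
    (h : |2 * (L * (A + 3 / 2)) * v + v ^ 2 + 2 * (L * (10 * A + 3 / 2)) * u + u ^ 2| ≤ L ^ 2) :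
    |v + 10 * u| ≤ 11 * (L / A) := by
  have hA0 : 0 < A := by linarith
  rw [abs_le] at hu hv h
  have hv2 : v ^ 2 ≤ (5 / 2 * L) ^ 2 := sq_le_sq' (by linarith) hv.2
  have hu2 : u ^ 2 ≤ (3 / 2 * L) ^ 2 := sq_le_sq' (by linarith) hu.2
  have h1 : L * (v + u) ≤ L * (4 * L) := mul_le_mul_of_nonneg_left (by linarith) hL.le
  have h2 : L * (-(4 * L)) ≤ L * (v + u) := mul_le_mul_of_nonneg_left (by linarith) hL.le
  have e : 11 * (L / A) = 11 * L / A := by ring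
  rw [e, abs_le, ← neg_div, div_le_iff₀ hA0, le_div_iff₀ hA0]
  constructor
  · refine le_of_mul_le_mul_left ?_ hL
    nlinarith [h.1]
  · refine le_of_mul_le_mul_left ?_ hL
    nlinarith [h.2, sq_nonneg u, sq_nonneg v]

/-- The fibre over `x` lies in an interval of length `(10/9)(L + 2.2 L/A)`. -/
lemma fibre_subset {γ : ℝ → ℝ × ℝ} (hfst : ∀ t, (γ t).1 = t)
    (hsnd : ∀ t, 0 ≤ t → (γ t).2 = t ^ 2) {x0 y0 L A : ℝ} (hL : 0 < L) (hA : 2 ≤ A)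
    {x : ℝ × ℝ} (hx : x ∈ cubeQ x0 y0 L) :
    IsetP γ x (setW1 γ x0 y0 L A) ⊆
      Icc (L * (A + 3 / 2) + 10 / 9 * (x0 - x.1 - 11 / 10 * (L / A)))
        (L * (A + 3 / 2) + 10 / 9 * (L + x0 - x.1 + 11 / 10 * (L / A))) := by
  rintro t ⟨⟨q, hq, s1, hs1, e1⟩, ⟨z, ⟨p, hp, rfl⟩, s, hs, e2⟩⟩
  simp only [cubeQ, intA, mem_prod, mem_Icc] at hx hq hs1 hp hs
  have hLA : L * 2 ≤ L * A := mul_le_mul_of_nonneg_left hA hL.le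
  have f1 := congrArg Prod.fst e1
  have f2 := congrArg Prod.fst e2
  have g2 := congrArg Prod.snd e2
  simp only [Prod.fst_add, Prod.snd_add, Prod.fst_sub, Prod.snd_sub, hfst] at f1 f2 g2
  rw [hsnd t (by linarith), hsnd s (by linarith), hsnd _ (by nlinarith), hsnd _ (by nlinarith)]
    at g2
  have key := abs_v_add_ten_u_le (u := s - L * (10 * A + 3 / 2)) (v := t - L * (A + 3 / 2))
    hL hA (by rw [abs_le]; constructor <;> linarith) (by rw [abs_le]; constructor <;> linarith)
    (by
      have e : 2 * (L * (A + 3 / 2)) * (t - L * (A + 3 / 2)) + (t - L * (A + 3 / 2)) ^ 2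
          + 2 * (L * (10 * A + 3 / 2)) * (s - L * (10 * A + 3 / 2))
          + (s - L * (10 * A + 3 / 2)) ^ 2 = p.2 - x.2 := by linear_combination g2
      rw [e, abs_le]; constructor <;> linarith)
  rw [abs_le] at key
  constructor <;> linarith

/-- The fibre over `x` contains an interval of length `(10/9)(L - 2.2 L/A)`. -/
lemma subset_fibre {γ : ℝ → ℝ × ℝ} (hfst : ∀ t, (γ t).1 = t)
    (hsnd : ∀ t, 0 ≤ t → (γ t).2 = t ^ 2) {x0 y0 L A : ℝ} (hL : 0 < L) (hA : 2 ≤ A)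
    {x : ℝ × ℝ} (hx : x ∈ cubeQ x0 y0 L) :
    Icc (L * (A + 3 / 2) + 10 / 9 * (x0 - x.1 + 11 / 10 * (L / A)))
        (L * (A + 3 / 2) + 10 / 9 * (L + x0 - x.1 - 11 / 10 * (L / A))) ⊆
      IsetP γ x (setW1 γ x0 y0 L A) := by
  rintro t ⟨ht1, ht2⟩
  have hx' := hx
  simp only [cubeQ, mem_prod, mem_Icc] at hx
  have hLA : L * 2 ≤ L * A := mul_le_mul_of_nonneg_left hA hL.le
  have hd : 0 < L / A := div_pos hL (by linarith)
  obtain ⟨v, rfl⟩ : ∃ v, t = L * (A + 3 / 2) + v := ⟨t - L * (A + 3 / 2), by ring⟩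
  have hv1 : -(10 / 9 * L) ≤ v := by linarith
  have hv2 : v ≤ 10 / 9 * L := by linarith
  have hvv : v ^ 2 ≤ (10 / 9 * L) ^ 2 := sq_le_sq' hv1 hv2
  have hLL : 0 < L ^ 2 := by positivity
  have hLLA : L ^ 2 * 2 ≤ L ^ 2 * A := mul_le_mul_of_nonneg_left hA hLL.le
  have m1 : L * (A + 3 / 2) * v ≤ L * (A + 3 / 2) * (10 / 9 * L) :=
    mul_le_mul_of_nonneg_left hv2 (by nlinarith)
  have m2 : L * (A + 3 / 2) * (-(10 / 9 * L)) ≤ L * (A + 3 / 2) * v :=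
    mul_le_mul_of_nonneg_left hv1 (by nlinarith)
  -- `s` is chosen so that `t² + s² = c₁² + c₂²`; the second coordinate then needs no correction.
  set R := (L * (A + 3 / 2)) ^ 2 + (L * (10 * A + 3 / 2)) ^ 2 - (L * (A + 3 / 2) + v) ^ 2 with hR
  have hR1 : (L * (10 * A)) ^ 2 ≤ R := by rw [hR]; nlinarith [sq_nonneg v]
  have hR2 : R ≤ (L * (10 * A + 3)) ^ 2 := by rw [hR]; nlinarith [sq_nonneg v]
  have hs1 : L * (10 * A) ≤ √R := Real.le_sqrt_of_sq_le hR1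
  have hs2 : √R ≤ L * (10 * A + 3) := Real.sqrt_le_iff.2 ⟨by nlinarith, hR2⟩
  have hsq : √R ^ 2 = R := Real.sq_sqrt (le_trans (sq_nonneg _) hR1)
  have key := abs_v_add_ten_u_le (u := √R - L * (10 * A + 3 / 2)) (v := v)
    hL hA (by rw [abs_le]; constructor <;> linarith) (by rw [abs_le]; constructor <;> linarith)
    (by
      have e : 2 * (L * (A + 3 / 2)) * v + v ^ 2
          + 2 * (L * (10 * A + 3 / 2)) * (√R - L * (10 * A + 3 / 2))
          + (√R - L * (10 * A + 3 / 2)) ^ 2 = 0 := by linear_combination hsq + hR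
      rw [e, abs_zero]; exact hLL.le)
  rw [abs_le] at key
  refine ⟨⟨x, hx', L * (A + 3 / 2) + v, ⟨by linarith, by linarith⟩, rfl⟩,
    ⟨_, ⟨(x.1 + v + (√R - L * (10 * A + 3 / 2)), x.2), ?_, rfl⟩, √R, ⟨hs1, hs2⟩, ?_⟩⟩
  · simp only [cubeQ, mem_prod, mem_Icc]
    refine ⟨⟨by linarith, by linarith⟩, hx.2⟩
  · ext
    · simp only [Prod.fst_add, Prod.fst_sub, hfst]
      ring
    · simp only [Prod.snd_add, Prod.snd_sub]
      rw [hsnd _ (by linarith), hsnd _ (by nlinarith), hsnd _ (by nlinarith),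
        hsnd _ (Real.sqrt_nonneg _), hsq, hR]
      ring

/-- Two-sided bound on the fibre length, uniform in `x ∈ Q`. -/
lemma fibre_volume {γ : ℝ → ℝ × ℝ} (hfst : ∀ t, (γ t).1 = t)
    (hsnd : ∀ t, 0 ≤ t → (γ t).2 = t ^ 2) {x0 y0 L A : ℝ} (hL : 0 < L) (hA : 2 ≤ A)
    {x : ℝ × ℝ} (hx : x ∈ cubeQ x0 y0 L) :
    ENNReal.ofReal (10 / 9 * (L - 11 / 5 * (L / A))) ≤
        volume (IsetP γ x (setW1 γ x0 y0 L A)) ∧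
      volume (IsetP γ x (setW1 γ x0 y0 L A)) ≤
        ENNReal.ofReal (10 / 9 * (L + 11 / 5 * (L / A))) := by
  constructor
  · refine le_trans (le_of_eq ?_) (measure_mono (subset_fibre hfst hsnd hL hA hx))
    rw [Real.volume_Icc]
    congr 1
    ring
  · refine (measure_mono (fibre_subset hfst hsnd hL hA hx)).trans (le_of_eq ?_)
    rw [Real.volume_Icc]
    congr 1
    ring

/-- **Comparability and asymptotic equality of fibre lengths.** For
`γ ∈ {γ_adj, γ_opp}`: (a) there are `0 < c < C` and `A* ≥ 1` such that for all
`A₁ ≥ A*`, every `(1,2)`-cube `Q` and every `x ∈ Q`,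
`c·ℓ(I) ≤ m(I(x,+,W₁)) ≤ C·ℓ(I)`; and (b) for every `ε > 0` there is `A** ≥ 1`
such that for all `A₁ ≥ A**` and all `x, x' ∈ Q`,
`m(I(x,+,W₁)) ≤ (1+ε)·m(I(x',+,W₁))`. -/
theorem fibre_length_comparable (γ : ℝ → ℝ × ℝ) (hγ : γ = gAdj ∨ γ = gOpp) :
    (∃ c C Astar : ℝ, 0 < c ∧ c < C ∧ 1 ≤ Astar ∧
      ∀ A1 : ℝ, Astar ≤ A1 → ∀ x0 y0 L : ℝ, 0 < L →
        ∀ x ∈ cubeQ x0 y0 L,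
          ENNReal.ofReal (c * L) ≤ volume (IsetP γ x (setW1 γ x0 y0 L A1)) ∧
          volume (IsetP γ x (setW1 γ x0 y0 L A1)) ≤ ENNReal.ofReal (C * L)) ∧
    ∀ ε : ℝ, 0 < ε → ∃ Astar2 : ℝ, 1 ≤ Astar2 ∧
      ∀ A1 : ℝ, Astar2 ≤ A1 → ∀ x0 y0 L : ℝ, 0 < L →
        ∀ x ∈ cubeQ x0 y0 L, ∀ x' ∈ cubeQ x0 y0 L,
          (volume (IsetP γ x (setW1 γ x0 y0 L A1))).toReal ≤
            (1 + ε) * (volume (IsetP γ x' (setW1 γ x0 y0 L A1))).toReal := by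
  have hfst : ∀ t, (γ t).1 = t := by
    rcases hγ with rfl | rfl <;> intro t <;> rfl
  have hsnd : ∀ t, 0 ≤ t → (γ t).2 = t ^ 2 := by
    rcases hγ with rfl | rfl <;> intro t ht
    · rfl
    · rcases ht.eq_or_lt with rfl | ht
      · simp [gOpp]
      · simp [gOpp, Real.sign_of_pos ht]
  refine ⟨⟨1, 2, 22, by norm_num, by norm_num, by norm_num, ?_⟩, ?_⟩
  · intro A hA x0 y0 L hL x hx
    obtain ⟨h1, h2⟩ := fibre_volume hfst hsnd (A := A) hL (by linarith) hx
    have hd : L / A ≤ L / 22 := div_le_div_of_nonneg_left hL.le (by norm_num) hA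
    exact ⟨(ENNReal.ofReal_le_ofReal (by linarith)).trans h1,
      h2.trans (ENNReal.ofReal_le_ofReal (by linarith))⟩
  · intro ε hε
    -- The threshold makes `r = 2.2/A` satisfy `1 + r ≤ (1 + ε)(1 - r)`.
    refine ⟨max 22 (11 / 5 * (2 + ε) / ε), le_max_of_le_left (by norm_num), ?_⟩
    intro A hA x0 y0 L hL x hx x' hx'
    have hA1 : 22 ≤ A := (le_max_left _ _).trans hA
    have hA2 : 11 / 5 * (2 + ε) / ε ≤ A := (le_max_right _ _).trans hA
    obtain ⟨-, h2⟩ := fibre_volume hfst hsnd (A := A) hL (by linarith) hx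
    obtain ⟨h1, h1'⟩ := fibre_volume hfst hsnd (A := A) hL (by linarith) hx'
    have hd : L / A ≤ L / 22 := div_le_div_of_nonneg_left hL.le (by norm_num) hA1
    have hd0 : 0 < L / A := div_pos hL (by linarith)
    have up := ENNReal.toReal_mono ENNReal.ofReal_ne_top h2
    have lo := ENNReal.toReal_mono (ne_top_of_le_ne_top ENNReal.ofReal_ne_top h1') h1
    rw [ENNReal.toReal_ofReal (by linarith)] at up lo
    refine up.trans (le_trans ?_ (mul_le_mul_of_nonneg_left lo (by linarith)))
    rw [div_le_iff₀ hε] at hA2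
    have hm := mul_le_mul_of_nonneg_left hA2 hd0.le
    have e : L / A * (A * ε) = L * ε := by
      have : A ≠ 0 := by linarith
      field_simp
    rw [e] at hm
    nlinarith

end
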